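/- arXiv:2405.17753 — 4 statements merged into one kernel-verified Lean document; each statement's English description precedes it below -/
import Mathlib

section
/- Let k be a positive integer, let K ⊆ ℝ^k be a nonempty, compact, convex set, and let F : ℝ^k → ℝ^k be continuous. Then there exists a point x* ∈ K such that ⟨F(x*), x − x*⟩ ≥ 0 for all x ∈ K; that is, the variational inequality VI(K, F) has a solution. -/
open RealInnerProductSpace

open MeasureTheory Metric in
theorem aux_lip {E : Type*} [NormedAddCommGroup E] [NormedSpace ℝ E]
    (v : E → E) (R : ℝ) (C : NNReal)
    (hC : LipschitzOnWith C v (closedBall 0 R)) (h0 : ∀ x, ‖x‖ = R → v x = 0) :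
    LipschitzWith C (fun x => if ‖x‖ < R then v x else 0) := by
  have key : ∀ x y : E, ‖x‖ < R → ¬ ‖y‖ < R → ‖v x‖ ≤ C * ‖x - y‖ := by
    intro x y hx hy
    have hcont : ContinuousOn (fun s : ℝ => ‖x + s • (y - x)‖) (Set.Icc 0 1) := by fun_prop
    have := intermediate_value_Icc (zero_le_one) hcont
    obtain ⟨s, hs, hsR⟩ := this (show R ∈ _ by
      constructor
      · simpa using hx.le
      · simpa using hy)
    have h1 := hC.dist_le_mul x (by simpa using hx.le) (x + s • (y - x)) (by simpa using hsR.le)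
    rw [h0 _ hsR, dist_zero_right, dist_eq_norm] at h1
    refine h1.trans ?_
    gcongr
    have : x - (x + s • (y - x)) = s • (x - y) := by module
    rw [this, norm_smul, Real.norm_of_nonneg hs.1]
    exact mul_le_of_le_one_left (norm_nonneg _) hs.2
  refine LipschitzWith.of_dist_le_mul fun x y => ?_
  by_cases hx : ‖x‖ < R <;> by_cases hy : ‖y‖ < R
  · simp only [hx, hy, if_true]
    exact hC.dist_le_mul x (by simpa using hx.le) y (by simpa using hy.le)
  · simp only [hx, hy, if_true, if_false, dist_zero_right]
    rw [dist_eq_norm]; exact key x y hx hy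
  · simp only [hx, hy, if_true, if_false, dist_zero_left]
    rw [dist_comm, dist_eq_norm]; exact key y x hy hx
  · simp only [hx, hy, if_false, dist_self]; positivity

theorem aux_bij {E : Type*} [NormedAddCommGroup E] [NormedSpace ℝ E] [CompleteSpace E]
    (w : E → E) (c : NNReal) (hc : c < 1) (hw : LipschitzWith c w) :
    Function.Bijective (fun x => x + w x) := by
  constructor
  · intro x y hxy
    have h1 : x - y = w y - w x := by
      simp only at hxy
      rw [sub_eq_sub_iff_add_eq_add, hxy, add_comm]
    have h2 := hw.dist_le_mul y x
    rw [dist_eq_norm, ← h1, dist_comm, dist_eq_norm] at h2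
    have h3 : (c : ℝ) < 1 := by exact_mod_cast hc
    have h4 : ‖x - y‖ = 0 := by nlinarith [norm_nonneg (x - y)]
    exact sub_eq_zero.1 (norm_eq_zero.1 h4)
  · intro z
    have hcw : ContractingWith c (fun x => z - w x) := by
      refine ⟨hc, LipschitzWith.of_dist_le_mul fun x y => ?_⟩
      rw [dist_sub_left]
      exact hw.dist_le_mul x y
    have := hcw.fixedPoint_isFixedPt
    refine ⟨ContractingWith.fixedPoint _ hcw, ?_⟩
    · have h : z - w (ContractingWith.fixedPoint _ hcw) = ContractingWith.fixedPoint _ hcw := this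
      simp only
      nth_rewrite 1 [← h]
      abel

open MeasureTheory Metric in
theorem aux_vol {E : Type*} [NormedAddCommGroup E] [NormedSpace ℝ E] [FiniteDimensional ℝ E]
    [MeasurableSpace E] [BorelSpace E] (μ : Measure E) [μ.IsAddHaarMeasure]
    (v : E → E) (R : ℝ) (hv : ContDiff ℝ 1 v)
    (h0 : ∀ x, ‖x‖ = R → v x = 0) :
    ∃ τ : ℝ, 0 < τ ∧ ∀ t : ℝ, 0 < t → t ≤ τ →
      ∫ x in ball (0 : E) R, (ContinuousLinearMap.id ℝ E + t • fderiv ℝ v x).det ∂μ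
        = μ.real (ball (0 : E) R) := by
  have : CompleteSpace E := FiniteDimensional.complete ℝ E
  have hcD : Continuous (fderiv ℝ v) := hv.continuous_fderiv (by norm_num)
  obtain ⟨M, hM⟩ := (isCompact_closedBall (0 : E) R).exists_bound_of_continuousOn hcD.continuousOn
  set C : NNReal := Real.toNNReal M with hCdef
  have hCM : ∀ x ∈ closedBall (0 : E) R, ‖fderiv ℝ v x‖ ≤ C := fun x hx =>
    (hM x hx).trans (Real.le_coe_toNNReal M)
  have hC : LipschitzOnWith C v (closedBall 0 R) :=
    (convex_closedBall 0 R).lipschitzOnWith_of_nnnorm_fderiv_le (𝕜 := ℝ)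
      (fun x _ => (hv.differentiable (by norm_num)) x) (fun x hx => hCM x hx)
  have hL := aux_lip v R C hC h0
  set u : E → E := fun x => if ‖x‖ < R then v x else 0 with hu
  have hdet : ∀ᶠ A : E →L[ℝ] E in nhds 0, 0 < (ContinuousLinearMap.id ℝ E + A).det := by
    have : Continuous (fun A : E →L[ℝ] E => (ContinuousLinearMap.id ℝ E + A).det) :=
      ContinuousLinearMap.continuous_det.comp (by fun_prop)
    refine this.continuousAt.eventually (lt_mem_nhds ?_)
    simp [ContinuousLinearMap.det]
  obtain ⟨δ, hδ, hδ'⟩ := Metric.eventually_nhds_iff.1 hdet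
  have hCpos : (0:ℝ) < C + 1 := by positivity
  refine ⟨min (δ / (2 * (C + 1))) (1 / (2 * (C + 1))), by positivity, fun t ht htτ => ?_⟩
  have ht1 : t * (C + 1) ≤ δ / 2 := by
    have := htτ.trans (min_le_left _ _)
    rw [le_div_iff₀ (by positivity)] at this
    linarith
  have ht2 : t * (C + 1) ≤ 1 / 2 := by
    have := htτ.trans (min_le_right _ _)
    rw [le_div_iff₀ (by positivity)] at this
    linarith
  have hbij : Function.Bijective (fun x => x + t • u x) := by
    refine aux_bij (fun x => t • u x) (Real.toNNReal (t * C)) ?_ ?_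
    · rw [← NNReal.coe_lt_coe, Real.coe_toNNReal _ (by positivity), NNReal.coe_one]
      linarith
    · refine LipschitzWith.of_dist_le_mul fun x y => ?_
      rw [Real.coe_toNNReal _ (by positivity), dist_smul₀, Real.norm_of_nonneg ht.le, mul_assoc]
      exact mul_le_mul_of_nonneg_left (hL.dist_le_mul x y) ht.le
  have hout : ∀ x, ¬ ‖x‖ < R → x + t • u x = x := by
    intro x hx; simp [hu, hx]
  have himg : (fun x => x + t • u x) '' ball (0 : E) R = ball 0 R := by
    ext z
    simp only [Set.mem_image, mem_ball_zero_iff]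
    constructor
    · rintro ⟨x, hx, rfl⟩
      by_contra hcon
      have h1 := hout _ hcon
      have h2 := hbij.1 h1
      rw [h2] at hcon
      exact hcon hx
    · intro hz
      obtain ⟨x, hx⟩ := hbij.2 z
      refine ⟨x, ?_, hx⟩
      by_contra hcon
      have h1 := hout _ hcon
      simp only at hx
      rw [h1] at hx
      rw [hx] at hcon
      exact hcon hz
  have hder : ∀ x ∈ ball (0 : E) R, HasFDerivWithinAt (fun x => x + t • u x)
      (ContinuousLinearMap.id ℝ E + t • fderiv ℝ v x) (ball (0 : E) R) x := by
    intro x hx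
    have h1 : HasFDerivAt (fun x => x + t • v x)
      (ContinuousLinearMap.id ℝ E + t • fderiv ℝ v x) x :=
      (hasFDerivAt_id x).add (((hv.differentiable (by norm_num)) x).hasFDerivAt.const_smul t)
    refine h1.hasFDerivWithinAt.congr (fun y hy => ?_) ?_
    · simp only [mem_ball_zero_iff] at hy
      simp [hu, hy]
    · simp only [mem_ball_zero_iff] at hx
      simp [hu, hx]
  have hcv := integral_image_eq_integral_abs_det_fderiv_smul μ measurableSet_ball hder
    (hbij.1.injOn) (fun _ => (1:ℝ))
  rw [himg] at hcv
  simp only [integral_const, smul_eq_mul, mul_one, measureReal_restrict_apply_univ] at hcv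
  rw [hcv]
  refine setIntegral_congr_fun measurableSet_ball fun x hx => ?_
  refine (abs_of_pos (α := ℝ) ?_).symm
  apply hδ'
  rw [dist_zero_right, norm_smul, Real.norm_of_nonneg ht.le]
  have := hCM x (ball_subset_closedBall hx)
  have : t * ‖fderiv ℝ v x‖ ≤ t * (C + 1) := by
    apply mul_le_mul_of_nonneg_left _ ht.le
    linarith
  linarith

theorem aux_poly {E : Type*} [NormedAddCommGroup E] [NormedSpace ℝ E] [FiniteDimensional ℝ E]
    (A : E →L[ℝ] E) : ∃ p : Polynomial ℝ, p.natDegree ≤ Module.finrank ℝ E ∧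
      ∀ t : ℝ, p.eval t = (ContinuousLinearMap.id ℝ E + t • A).det := by
  let b := Module.finBasis ℝ E
  let N := LinearMap.toMatrix b b (A : E →ₗ[ℝ] E)
  refine ⟨((Polynomial.X : Polynomial ℝ) • N.map Polynomial.C
    + (1 : Matrix _ _ ℝ).map Polynomial.C).det, ?_, ?_⟩
  · simpa using Polynomial.natDegree_det_X_add_C_le N 1
  · intro t
    rw [ContinuousLinearMap.det, ← LinearMap.det_toMatrix b, ← Polynomial.coe_evalRingHom,
      RingHom.map_det]
    congr 1
    have : ((ContinuousLinearMap.id ℝ E + t • A : E →L[ℝ] E) : E →ₗ[ℝ] E)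
        = LinearMap.id + t • (A : E →ₗ[ℝ] E) := by ext; simp
    rw [this, (LinearMap.toMatrix b b).map_add, (LinearMap.toMatrix b b).map_smul,
      LinearMap.toMatrix_id]
    ext i j
    by_cases hij : i = j <;> simp [N, hij, add_comm] <;> exact mul_comm _ _

open MeasureTheory Metric in
theorem aux_vol_one {E : Type*} [NormedAddCommGroup E] [NormedSpace ℝ E] [FiniteDimensional ℝ E]
    [MeasurableSpace E] [BorelSpace E] (μ : Measure E) [μ.IsAddHaarMeasure]
    (v : E → E) (R : ℝ) (hv : ContDiff ℝ 1 v)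
    (h0 : ∀ x, ‖x‖ = R → v x = 0) :
      ∫ x in ball (0 : E) R, (ContinuousLinearMap.id ℝ E + fderiv ℝ v x).det ∂μ
        = μ.real (ball (0 : E) R) := by
  obtain ⟨τ, hτ, H⟩ := aux_vol μ v R hv h0
  let s := Finset.range (Module.finrank ℝ E + 1)
  let nd : ℕ → ℝ := fun i => τ / (i + 1)
  have hinj : Set.InjOn nd s := by
    intro i _ j _ hij
    simp only [nd] at hij
    rw [div_eq_div_iff (by positivity) (by positivity)] at hij
    have := mul_left_cancel₀ hτ.ne' hij
    have : (j : ℝ) = i := by linarith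
    exact_mod_cast this.symm
  let c : ℕ → ℝ := fun i => (Lagrange.basis s nd i).eval 1
  have hc : ∑ i ∈ s, c i = 1 := by
    have := congrArg (Polynomial.eval 1) (Lagrange.sum_basis hinj ⟨0, by simp [s]⟩)
    simpa [Polynomial.eval_finsetSum] using this
  have hexp : ∀ A : E →L[ℝ] E, (ContinuousLinearMap.id ℝ E + A).det
      = ∑ i ∈ s, c i * (ContinuousLinearMap.id ℝ E + nd i • A).det := by
    intro A
    obtain ⟨p, hp, hpe⟩ := aux_poly A
    have h1 := Lagrange.eq_interpolate (f := p) hinj (by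
      refine Polynomial.degree_le_natDegree.trans_lt ?_
      simp only [s, Finset.card_range]
      exact_mod_cast Nat.lt_succ_of_le hp)
    have h2 := congrArg (Polynomial.eval 1) h1
    rw [hpe, one_smul, Lagrange.interpolate_apply, Polynomial.eval_finsetSum] at h2
    rw [h2]
    refine Finset.sum_congr rfl fun i _ => ?_
    rw [Polynomial.eval_mul, Polynomial.eval_C, hpe, mul_comm]
  rw [integral_congr_ae (Filter.Eventually.of_forall fun x => hexp (fderiv ℝ v x))]
  have hcD : Continuous (fderiv ℝ v) := hv.continuous_fderiv (by norm_num)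
  rw [integral_finsetSum]
  · rw [← one_mul (μ.real _), ← hc, Finset.sum_mul]
    refine Finset.sum_congr rfl fun i _ => ?_
    rw [integral_const_mul, H]
    · positivity
    · simp only [nd]
      apply div_le_self hτ.le
      have : (0:ℝ) ≤ i := by positivity
      linarith
  · intro i _
    have : Continuous fun x =>
        c i * (ContinuousLinearMap.id ℝ E + nd i • fderiv ℝ v x).det :=
      continuous_const.mul (ContinuousLinearMap.continuous_det.comp (by fun_prop))
    exact (this.continuousOn.integrableOn_compact (isCompact_closedBall 0 R)).mono_set
      ball_subset_closedBall

open MeasureTheory Metric in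
theorem aux_smooth {E : Type*} [NormedAddCommGroup E] [InnerProductSpace ℝ E]
    [FiniteDimensional ℝ E] [MeasurableSpace E] [BorelSpace E]
    (g : E → E) (R : ℝ) (hR : 0 < R) (hg : ContDiff ℝ 1 g)
    (h0 : ∀ x, R ≤ ‖x‖ → g x = 0) : ∃ x, ‖x‖ ≤ R ∧ x + g x = 0 := by
  by_contra! hcon
  have hne : ∀ x, x + g x ≠ 0 := by
    intro x
    by_cases hx : ‖x‖ ≤ R
    · exact hcon x hx
    · rw [h0 x (not_le.1 hx).le, add_zero]
      rintro rfl
      simp [hR.le] at hx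
  have hG : ContDiff ℝ 1 (fun x => x + g x) := contDiff_id.add hg
  let f : E → E := fun x => (R / ‖x + g x‖) • (x + g x)
  have hf : ContDiff ℝ 1 f :=
    (contDiff_const.div (hG.norm ℝ hne) (fun x => norm_ne_zero_iff.2 (hne x))).smul hG
  have hfn : ∀ x, ‖f x‖ = R := by
    intro x
    simp only [f]
    rw [norm_smul, norm_div, norm_norm, Real.norm_of_nonneg hR.le,
      div_mul_cancel₀ _ (norm_ne_zero_iff.2 (hne x))]
  have hv : ContDiff ℝ 1 (fun x => f x - x) := hf.sub contDiff_id
  have hvol := aux_vol_one (volume : Measure E) (fun x => f x - x) R hv (by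
    intro x hx
    simp only [f]
    rw [h0 x hx.ge, add_zero, hx, div_self hR.ne', one_smul, sub_self])
  have hpos : 0 < (volume : Measure E).real (ball (0 : E) R) :=
    ENNReal.toReal_pos (measure_ball_pos _ _ hR).ne' measure_ball_lt_top.ne
  rw [← hvol] at hpos
  refine hpos.ne' ?_
  have : ∀ x, (ContinuousLinearMap.id ℝ E + fderiv ℝ (fun x => f x - x) x).det = 0 := by
    intro x
    have hfd := ((hf.differentiable (by norm_num)) x).hasFDerivAt
    have h1 : fderiv ℝ (fun x => f x - x) x = fderiv ℝ f x - ContinuousLinearMap.id ℝ E :=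
      (hfd.sub (hasFDerivAt_id x)).fderiv
    rw [h1, add_sub_cancel]
    have h2 : ∀ w, ⟪f x, fderiv ℝ f x w⟫ = 0 := by
      intro w
      have h3 := hfd.inner ℝ hfd
      have h4 : (fun y => ⟪f y, f y⟫) = fun _ => R ^ 2 := by
        funext y; rw [real_inner_self_eq_norm_sq, hfn]
      rw [h4] at h3
      have h5 := congrArg (fun L => L w) (h3.unique (hasFDerivAt_const _ _))
      simp [fderivInnerCLM_apply, real_inner_comm] at h5
      linarith [real_inner_comm (f x) (fderiv ℝ f x w)]
    by_contra hdet
    have hsurj : Function.Surjective (fderiv ℝ f x) := by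
      have hu : IsUnit (LinearMap.det (fderiv ℝ f x : E →ₗ[ℝ] E)) := isUnit_iff_ne_zero.2 hdet
      intro z
      obtain ⟨w, hw⟩ := (LinearMap.equivOfIsUnitDet hu).surjective z
      exact ⟨w, by simpa using hw⟩
    obtain ⟨w, hw⟩ := hsurj (f x)
    have h6 := h2 w
    rw [hw, real_inner_self_eq_norm_sq, hfn] at h6
    exact (pow_pos hR 2).ne' h6
  simp_rw [this]
  simp

open Metric in
theorem aux_cont {E : Type*} [NormedAddCommGroup E] [InnerProductSpace ℝ E]
    [FiniteDimensional ℝ E] [MeasurableSpace E] [BorelSpace E]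
    (g : E → E) (R : ℝ) (hR : 0 < R) (hg : Continuous g)
    (h0 : ∀ x, R ≤ ‖x‖ → g x = 0) : ∃ x, x + g x = 0 := by
  obtain ⟨x0, hx0, hmin⟩ := (isCompact_closedBall (0 : E) R).exists_isMinOn
    ⟨0, by simp [hR.le]⟩ (f := fun x => ‖x + g x‖) (by fun_prop)
  by_contra! hcon
  have hε : 0 < ‖x0 + g x0‖ := norm_pos_iff.2 (hcon x0)
  set ε := ‖x0 + g x0‖
  let t : E → Set E := fun y => {z | z ∈ ball (g y) ε ∧ (R ≤ ‖y‖ → z = 0)}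
  obtain ⟨h, hh⟩ := exists_contMDiffMap_forall_mem_convex_of_local_const (n := 1)
    (modelWithCornersSelf ℝ E) (t := t) (by
      intro y
      by_cases hy : R ≤ ‖y‖
      · have : t y = ball (g y) ε ∩ {0} := by ext; simp [t, hy]
        rw [this]; exact (convex_ball _ _).inter (convex_singleton _)
      · have : t y = ball (g y) ε := by ext; simp [t, hy]
        rw [this]; exact convex_ball _ _) (by
      intro x
      refine ⟨g x, ?_⟩
      have h1 : ∀ᶠ y in nhds x, g x ∈ ball (g y) ε := by
        have := hg.continuousAt.eventually (ball_mem_nhds (g x) hε)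
        filter_upwards [this] with y hy
        rwa [mem_ball, dist_comm]
      by_cases hx : R ≤ ‖x‖
      · filter_upwards [h1] with y hy
        exact ⟨hy, fun _ => h0 x hx⟩
      · have h2 : ∀ᶠ y in nhds x, ‖y‖ < R :=
          continuous_norm.continuousAt.eventually (gt_mem_nhds (not_le.1 hx))
        filter_upwards [h1, h2] with y hy hy2
        exact ⟨hy, fun h => absurd h (not_le.2 hy2)⟩)
  obtain ⟨x, hxR, hx⟩ := aux_smooth h R hR h.contMDiff.contDiff (fun x hx => (hh x).2 hx)
  have h1 := hmin (show x ∈ closedBall (0 : E) R by simpa using hxR)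
  have h2 := (hh x).1
  rw [mem_ball, dist_eq_norm] at h2
  have h3 : x + g x = -(h x - g x) := by
    have : h x = - x := by rw [eq_neg_iff_add_eq_zero, add_comm]; exact hx
    rw [this]; abel
  simp only [Set.mem_ofPred_eq, h3, norm_neg] at h1
  exact absurd h2 (not_lt.2 h1)

theorem aux_brouwer {E : Type*} [NormedAddCommGroup E] [InnerProductSpace ℝ E]
    [FiniteDimensional ℝ E] [MeasurableSpace E] [BorelSpace E]
    (T : E → E) (R : ℝ) (hR : 0 < R) (hT : Continuous T) (hb : ∀ x, ‖T x‖ ≤ R) :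
    ∃ x, T x = x := by
  let χ : E → ℝ := fun x => max 0 (min 1 (2 - ‖x‖ / R))
  have hχ : Continuous χ := by fun_prop
  obtain ⟨x, hx⟩ := aux_cont (fun x => -(χ x • T x)) (2 * R) (by positivity)
    (by fun_prop) (by
      intro x hx
      have : χ x = 0 := by
        simp only [χ]
        apply max_eq_left
        refine (min_le_right _ _).trans ?_
        have : 2 ≤ ‖x‖ / R := by rwa [le_div_iff₀ hR]
        linarith
      simp [this])
  have hx' : x = χ x • T x := by rwa [← sub_eq_add_neg, sub_eq_zero] at hx
  have h0 : 0 ≤ χ x := le_max_left _ _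
  have h1 : χ x ≤ 1 := max_le zero_le_one (min_le_left _ _)
  have hn : ‖x‖ ≤ R := by
    rw [hx', norm_smul, Real.norm_of_nonneg h0]
    nlinarith [hb x, norm_nonneg (T x)]
  have h2 : χ x = 1 := by
    have : ‖x‖ / R ≤ 1 := by rwa [div_le_one hR]
    simp only [χ]
    rw [min_eq_left (by linarith), max_eq_right zero_le_one]
  refine ⟨x, ?_⟩
  rw [h2, one_smul] at hx'
  exact hx'.symm

/-- Existence of a solution to the variational inequality VI(K, F) on a
nonempty, compact, convex subset `K` of `ℝ^k` with continuous `F`. -/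
theorem vi_solution_exists (k : ℕ) (hk : 0 < k)
    (K : Set (EuclideanSpace ℝ (Fin k))) (hKne : K.Nonempty)
    (hKcomp : IsCompact K) (hKconv : Convex ℝ K)
    (F : EuclideanSpace ℝ (Fin k) → EuclideanSpace ℝ (Fin k))
    (hF : Continuous F) :
    ∃ x ∈ K, ∀ y ∈ K, 0 ≤ ⟪F x, y - x⟫ := by
  have hP : ∀ u : EuclideanSpace ℝ (Fin k), ∃ v ∈ K, ∀ w ∈ K, ⟪u - v, w - v⟫ ≤ 0 := by
    intro u
    obtain ⟨v, hv, h⟩ := exists_norm_eq_iInf_of_complete_convex hKne hKcomp.isComplete hKconv u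
    exact ⟨v, hv, (norm_eq_iInf_iff_real_inner_le_zero hKconv hv).1 h⟩
  choose P hPK hPi using hP
  have hPc : Continuous P := by
    refine LipschitzWith.continuous (K := 1) (LipschitzWith.of_dist_le_mul fun x y => ?_)
    rw [NNReal.coe_one, one_mul, dist_eq_norm, dist_eq_norm]
    have h1 := hPi x (P y) (hPK y)
    have h2 := hPi y (P x) (hPK x)
    have h3 : ‖P x - P y‖ ^ 2 ≤ ⟪x - y, P x - P y⟫ := by
      rw [← real_inner_self_eq_norm_sq]
      simp only [inner_sub_left, inner_sub_right] at *
      linarith [real_inner_comm (P x) (P y)]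
    have h4 := h3.trans (real_inner_le_norm _ _)
    by_contra! hlt
    nlinarith [norm_nonneg (x - y)]
  obtain ⟨R, hR, hKR⟩ := hKcomp.isBounded.exists_pos_norm_le
  obtain ⟨x, hx⟩ := aux_brouwer (fun x => P (x - F x)) R hR (by fun_prop)
    (fun x => hKR _ (hPK _))
  refine ⟨x, hx ▸ hPK _, fun y hy => ?_⟩
  have := hPi (x - F x) y hy
  rw [hx, sub_sub_cancel_left, inner_neg_left] at this
  linarith
end

section
/- Symmetry principle: let F : ℝ^k → ℝ^k be continuously differentiable and suppose that for every x ∈ ℝ^k the Jacobian matrix DF(x) is symmetric. Then the scalar function f(x) := ∫₀¹ ⟨F(t·x), x⟩ dt is differentiable on ℝ^k and ∇f(x) = F(x) for all x; i.e., F is a gradient map. -/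
open RealInnerProductSpace intervalIntegral

/-- Symmetry principle: if `F : ℝ^k → ℝ^k` is continuously differentiable with
symmetric Jacobian everywhere, then `f(x) = ∫₀¹ ⟨F(t•x), x⟩ dt` is
differentiable with gradient `F`; i.e. `F` is a gradient map. -/
theorem gradient_map_of_symmetric_jacobian (k : ℕ)
    (F : EuclideanSpace ℝ (Fin k) → EuclideanSpace ℝ (Fin k))
    (hF : ContDiff ℝ 1 F)
    (hsymm : ∀ x u v, ⟪fderiv ℝ F x u, v⟫ = ⟪fderiv ℝ F x v, u⟫) :
    ∀ x, HasGradientAt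
      (fun y : EuclideanSpace ℝ (Fin k) => ∫ t in (0:ℝ)..1, ⟪F (t • y), y⟫)
      (F x) x := by
  intro x
  have hω : ∀ y ∈ (Set.univ : Set (EuclideanSpace ℝ (Fin k))),
      HasFDerivWithinAt (fun z => innerSL ℝ (F z))
        ((innerSL ℝ (E := EuclideanSpace ℝ (Fin k))).comp (fderiv ℝ F y)) Set.univ y := by
    intro y _
    have h1 : HasFDerivAt F (fderiv ℝ F y) y :=
      ((hF.differentiable (by norm_num)) y).hasFDerivAt
    exact ((innerSL ℝ (E := EuclideanSpace ℝ (Fin k))).hasFDerivAt.comp y h1).hasFDerivWithinAt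
  have key := convex_univ.hasFDerivWithinAt_curveIntegral_segment_of_hasFDerivWithinAt_symmetric
    hω (fun a _ u _ v _ => by simpa using hsymm a u v) (Set.mem_univ 0) (Set.mem_univ x)
  rw [hasGradientAt_iff_hasFDerivAt]
  have key2 := key.hasFDerivAt_of_univ
  simp only [curveIntegral_segment, AffineMap.lineMap_apply, vsub_eq_sub, vadd_eq_add, sub_zero,
    add_zero, innerSL_apply_apply] at key2
  exact key2
end

section
/- Existence of regression equilibrium: in the market model with C and S symmetric positive semidefinite and every γⱼ ≥ 0, if the feasible set K is nonempty, then the variational inequality VI(K, ∇f) has a solution; that is, there exists (Θ*, G*, L*) ∈ K such that ⟨∇f(Θ*,G*,L*), (Θ,G,L) − (Θ*,G*,L*)⟩ ≥ 0 for all (Θ,G,L) ∈ K. -/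
open Matrix

/-- Decision variables of the market model: a regression profile `Θ` and, for
each sample `i`, vectors `pᵢ`, `rᵢ⁺`, `rᵢ⁻`, `ℓᵢ`. -/
abbrev MarketPoint (nb n m : ℕ) :=
  (Fin nb → Fin m → ℝ) × (Fin n → Fin nb → ℝ) × (Fin n → Fin nb → ℝ) ×
    (Fin n → Fin nb → ℝ) × (Fin n → Fin nb → ℝ)

/-- The market objective `f`. -/
noncomputable def marketObj (nb n m : ℕ) (C S : Matrix (Fin nb) (Fin nb) ℝ)
    (γ : Fin nb → ℝ) (c cplus cminus s : Fin nb → ℝ)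
    (φ : Fin n → Fin m → ℝ) (w : Fin n → Fin nb → ℝ) :
    MarketPoint nb n m → ℝ :=
  fun x =>
    match x with
    | (Θ, p, rp, rm, ℓ) =>
      (1 / (n : ℝ)) * ∑ i, (
        ((Matrix.of Θ).mulVec (φ i) - w i) ⬝ᵥ
          (Matrix.diagonal γ).mulVec ((Matrix.of Θ).mulVec (φ i) - w i) +
        (p i + rp i - rm i) ⬝ᵥ C.mulVec (p i + rp i - rm i) +
        c ⬝ᵥ p i + cplus ⬝ᵥ rp i - cminus ⬝ᵥ rm i +
        ℓ i ⬝ᵥ S.mulVec (ℓ i) + s ⬝ᵥ ℓ i)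

/-- The feasible set `K` of the market model. -/
def marketFeas (nb n m nl : ℕ) (d plow pup : Fin nb → ℝ)
    (Fptdf : Matrix (Fin nl) (Fin nb) ℝ) (fbar : Fin nl → ℝ)
    (φ : Fin n → Fin m → ℝ) (w : Fin n → Fin nb → ℝ) (τ : Fin nb → ℝ) :
    Set (MarketPoint nb n m) :=
  { x | match x with
    | (Θ, p, rp, rm, ℓ) =>
      (∀ i, ∑ j, (p i j + (Matrix.of Θ).mulVec (φ i) j - d j) = 0) ∧
      (∀ i, ∑ j, (rp i j - rm i j - (Matrix.of Θ).mulVec (φ i) j + w i j + ℓ i j) = 0) ∧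
      (∀ i, ∀ l, |Fptdf.mulVec (p i + (Matrix.of Θ).mulVec (φ i) - d) l| ≤ fbar l) ∧
      (∀ i, ∀ l, |Fptdf.mulVec (p i + (Matrix.of Θ).mulVec (φ i) - d) l +
        Fptdf.mulVec (rp i - rm i - (Matrix.of Θ).mulVec (φ i) + w i + ℓ i) l| ≤ fbar l) ∧
      (∀ i, plow ≤ p i + rp i - rm i ∧ p i + rp i - rm i ≤ pup) ∧
      (∀ i, 0 ≤ rp i ∧ rp i ≤ pup - p i) ∧
      (∀ i, 0 ≤ rm i ∧ rm i ≤ p i - plow) ∧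
      (∀ i, 0 ≤ ℓ i ∧ ℓ i ≤ d) ∧
      (∀ j, ∑ jm, |Θ j jm| ≤ τ j) }

theorem marketObj_continuous (nb n m : ℕ) (C S : Matrix (Fin nb) (Fin nb) ℝ)
    (γ : Fin nb → ℝ) (c cplus cminus s : Fin nb → ℝ)
    (φ : Fin n → Fin m → ℝ) (w : Fin n → Fin nb → ℝ) :
    Continuous (marketObj nb n m C S γ c cplus cminus s φ w) := by
  unfold marketObj
  simp only [Matrix.mulVec, dotProduct, Matrix.of_apply, Pi.sub_apply, Pi.add_apply]
  fun_prop

theorem marketFeas_closed (nb n m nl : ℕ) (d plow pup : Fin nb → ℝ)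
    (Fptdf : Matrix (Fin nl) (Fin nb) ℝ) (fbar : Fin nl → ℝ)
    (φ : Fin n → Fin m → ℝ) (w : Fin n → Fin nb → ℝ) (τ : Fin nb → ℝ) :
    IsClosed (marketFeas nb n m nl d plow pup Fptdf fbar φ w τ) := by
  unfold marketFeas
  simp only [Matrix.mulVec, dotProduct, Matrix.of_apply, Pi.sub_apply, Pi.add_apply, Pi.le_def,
    Pi.zero_apply, Set.ofPred_and, Set.ofPred_forall]
  repeat' first
    | apply IsClosed.inter
    | (apply isClosed_iInter; intro _)
    | (apply isClosed_eq <;> fun_prop)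
    | (apply isClosed_le <;> fun_prop)

theorem marketFeas_convex (nb n m nl : ℕ) (d plow pup : Fin nb → ℝ)
    (Fptdf : Matrix (Fin nl) (Fin nb) ℝ) (fbar : Fin nl → ℝ)
    (φ : Fin n → Fin m → ℝ) (w : Fin n → Fin nb → ℝ) (τ : Fin nb → ℝ) :
    Convex ℝ (marketFeas nb n m nl d plow pup Fptdf fbar φ w τ) := by
  rintro ⟨Θ, p, rp, rm, l⟩ ⟨h1, h2, h3, h4, h5, h6, h7, h8, h9⟩
    ⟨Θ', p', rp', rm', l'⟩ ⟨k1, k2, k3, k4, k5, k6, k7, k8, k9⟩ a b ha hb hab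
  have hb' : b = 1 - a := by linarith
  have cabs : ∀ {x y z t : ℝ}, |x| ≤ t → |y| ≤ t → z = a * x + b * y → |z| ≤ t := by
    intro x y z t hx hy hz
    rw [abs_le] at *
    subst hb'
    constructor <;> nlinarith
  have cle : ∀ {x y x' y' : ℝ}, x ≤ y → x' ≤ y' → a * x + b * x' ≤ a * y + b * y' := by
    intro x y x' y' h h'
    nlinarith
  have hΘ : ∀ i, (Matrix.of (a • Θ + b • Θ')).mulVec (φ i) =
      a • (Matrix.of Θ).mulVec (φ i) + b • (Matrix.of Θ').mulVec (φ i) := by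
    intro i
    rw [← Matrix.smul_mulVec, ← Matrix.smul_mulVec, ← Matrix.add_mulVec]
    rfl
  have e1 : ∀ i, (a • p + b • p') i + (Matrix.of (a • Θ + b • Θ')).mulVec (φ i) - d =
      a • (p i + (Matrix.of Θ).mulVec (φ i) - d) + b • (p' i + (Matrix.of Θ').mulVec (φ i) - d) := by
    intro i
    rw [hΘ]; ext j; subst hb'
    simp; ring
  have e2 : ∀ i, (a • rp + b • rp') i - (a • rm + b • rm') i -
        (Matrix.of (a • Θ + b • Θ')).mulVec (φ i) + w i + (a • l + b • l') i =
      a • (rp i - rm i - (Matrix.of Θ).mulVec (φ i) + w i + l i) +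
      b • (rp' i - rm' i - (Matrix.of Θ').mulVec (φ i) + w i + l' i) := by
    intro i
    rw [hΘ]; ext j; subst hb'
    simp; ring
  have C : ∀ u v : Fin nb → ℝ, ∑ j, u j = 0 → ∑ j, v j = 0 → ∑ j, (a • u + b • v) j = 0 := by
    intro u v hu hv
    simp only [Pi.add_apply, Pi.smul_apply, smul_eq_mul, Finset.sum_add_distrib,
      ← Finset.mul_sum, hu, hv]
    simp
  refine ⟨fun i => ?_, fun i => ?_, fun i q => ?_, fun i q => ?_, fun i => ⟨fun j => ?_, fun j => ?_⟩,
    fun i => ⟨fun j => ?_, fun j => ?_⟩, fun i => ⟨fun j => ?_, fun j => ?_⟩,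
    fun i => ⟨fun j => ?_, fun j => ?_⟩, fun j => ?_⟩
  · have := Finset.sum_congr (s₁ := Finset.univ) rfl (fun j _ => congrFun (e1 i) j)
    refine this.trans ?_
    have A := h1 i
    have B := k1 i
    exact C _ _ A B
  · have := Finset.sum_congr (s₁ := Finset.univ) rfl (fun j _ => congrFun (e2 i) j)
    refine this.trans ?_
    have A := h2 i
    have B := k2 i
    exact C _ _ A B
  · refine cabs (h3 i q) (k3 i q) ?_
    simp only [Prod.smul_mk]
    rw [e1, Matrix.mulVec_add, Matrix.mulVec_smul, Matrix.mulVec_smul]; simp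
  · refine cabs (h4 i q) (k4 i q) ?_
    simp only [Prod.smul_mk]
    rw [e1, e2, Matrix.mulVec_add, Matrix.mulVec_smul, Matrix.mulVec_smul, Matrix.mulVec_add,
      Matrix.mulVec_smul, Matrix.mulVec_smul]
    simp only [Pi.add_apply, Pi.smul_apply, smul_eq_mul]; ring
  · have := cle ((h5 i).1 j) ((k5 i).1 j)
    subst hb'; simp at *; linarith
  · have := cle ((h5 i).2 j) ((k5 i).2 j)
    subst hb'; simp at *; linarith
  · have := cle ((h6 i).1 j) ((k6 i).1 j)
    subst hb'; simp at *; linarith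
  · have := cle ((h6 i).2 j) ((k6 i).2 j)
    subst hb'; simp at *; linarith
  · have := cle ((h7 i).1 j) ((k7 i).1 j)
    subst hb'; simp at *; linarith
  · have := cle ((h7 i).2 j) ((k7 i).2 j)
    subst hb'; simp at *; linarith
  · have := cle ((h8 i).1 j) ((k8 i).1 j)
    subst hb'; simp at *; linarith
  · have := cle ((h8 i).2 j) ((k8 i).2 j)
    subst hb'; simp at *; linarith
  · have := cle (h9 j) (k9 j)
    calc ∑ q, |(a • Θ + b • Θ') j q| ≤ ∑ q, (a * |Θ j q| + b * |Θ' j q|) := by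
          apply Finset.sum_le_sum
          intro q _
          refine (abs_add_le _ _).trans ?_
          simp [abs_mul, abs_of_nonneg ha, abs_of_nonneg hb]
      _ = a * ∑ q, |Θ j q| + b * ∑ q, |Θ' j q| := by
          rw [Finset.sum_add_distrib, Finset.mul_sum, Finset.mul_sum]
      _ ≤ a * τ j + b * τ j := this
      _ = τ j := by rw [← add_mul, hab, one_mul]

theorem marketFeas_compact (nb n m nl : ℕ) (d plow pup : Fin nb → ℝ)
    (Fptdf : Matrix (Fin nl) (Fin nb) ℝ) (fbar : Fin nl → ℝ)
    (φ : Fin n → Fin m → ℝ) (w : Fin n → Fin nb → ℝ) (τ : Fin nb → ℝ) :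
    IsCompact (marketFeas nb n m nl d plow pup Fptdf fbar φ w τ) := by
  refine IsCompact.of_isClosed_subset (s := Set.Icc
    ((fun j _ => - τ j, fun _ => plow, 0, 0, 0) : MarketPoint nb n m)
    (fun j _ => τ j, fun _ => pup, fun _ => pup - plow, fun _ => pup - plow, fun _ => d))
    isCompact_Icc (marketFeas_closed ..) ?_
  rintro ⟨Θ, p, rp, rm, l⟩ ⟨-, -, -, -, -, h6, h7, h8, h9⟩
  have hΘ : ∀ j q, |Θ j q| ≤ τ j := fun j q =>
    (Finset.single_le_sum (f := fun q => |Θ j q|) (fun _ _ => abs_nonneg _)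
      (Finset.mem_univ q)).trans (h9 j)
  refine ⟨⟨fun j q => (abs_le.1 (hΘ j q)).1, fun i j => ?_, fun i => (h6 i).1, fun i => (h7 i).1,
    fun i => (h8 i).1⟩, ⟨fun j q => (abs_le.1 (hΘ j q)).2, fun i j => ?_, fun i j => ?_,
    fun i j => ?_, fun i => (h8 i).2⟩⟩ <;>
  · have a1 := (h6 i).1 j
    have a2 := (h6 i).2 j
    have a3 := (h7 i).1 j
    have a4 := (h7 i).2 j
    simp at *
    linarith

/-- Existence of regression equilibrium: if `C`, `S` are symmetric positive
semidefinite, all `γⱼ ≥ 0`, and the feasible set `K` is nonempty, then the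
variational inequality VI(K, ∇f) has a solution: there is `x* ∈ K` with
`⟨∇f(x*), x − x*⟩ = Df(x*)[x − x*] ≥ 0` for all `x ∈ K`. -/
theorem regression_equilibrium_exists (nb n m nl : ℕ)
    (C S : Matrix (Fin nb) (Fin nb) ℝ) (hC : C.PosSemidef) (hS : S.PosSemidef)
    (γ : Fin nb → ℝ) (hγ : ∀ j, 0 ≤ γ j)
    (c cplus cminus s d plow pup : Fin nb → ℝ) (hp : plow ≤ pup)
    (Fptdf : Matrix (Fin nl) (Fin nb) ℝ) (fbar : Fin nl → ℝ)
    (φ : Fin n → Fin m → ℝ) (w : Fin n → Fin nb → ℝ)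
    (τ : Fin nb → ℝ) (hτ : ∀ j, 0 < τ j)
    (hne : (marketFeas nb n m nl d plow pup Fptdf fbar φ w τ).Nonempty) :
    ∃ xstar ∈ marketFeas nb n m nl d plow pup Fptdf fbar φ w τ,
      ∀ x ∈ marketFeas nb n m nl d plow pup Fptdf fbar φ w τ,
        0 ≤ fderiv ℝ (marketObj nb n m C S γ c cplus cminus s φ w) xstar
              (x - xstar) := by
  obtain ⟨x, hx, hmin⟩ := (marketFeas_compact nb n m nl d plow pup Fptdf fbar φ w τ).exists_isMinOn
    hne (marketObj_continuous nb n m C S γ c cplus cminus s φ w).continuousOn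
  refine ⟨x, hx, fun y hy => ?_⟩
  by_cases hd : DifferentiableAt ℝ (marketObj nb n m C S γ c cplus cminus s φ w) x
  · exact hmin.localize.hasFDerivWithinAt_nonneg hd.hasFDerivAt.hasFDerivWithinAt
      (sub_mem_posTangentConeAt_of_segment_subset
        ((marketFeas_convex nb n m nl d plow pup Fptdf fbar φ w τ).segment_subset hx hy))
  · rw [fderiv_zero_of_not_differentiableAt hd]; simp
end

section
/- Uniqueness of regression equilibrium: in the market model with C and S symmetric positive definite and every γⱼ > 0, any two solutions (Θ, G, L) and (Θ', G', L') of the variational inequality VI(K, ∇f) satisfy, for every sample i: Θφᵢ = Θ'φᵢ, pᵢ + rᵢ⁺ − rᵢ⁻ = pᵢ' + rᵢ'⁺ − rᵢ'⁻, and ℓᵢ = ℓᵢ'. If moreover the feature Gram matrix Σᵢ φᵢ φᵢᵀ is positive definite, then Θ = Θ'. -/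
open Matrix

lemma aux_quad {k : ℕ} (M : Matrix (Fin k) (Fin k) ℝ) (a u : Fin k → ℝ) (t : ℝ) :
    (a + t • u) ⬝ᵥ M.mulVec (a + t • u) =
      a ⬝ᵥ M.mulVec a + t * ((a + u) ⬝ᵥ M.mulVec (a + u) - a ⬝ᵥ M.mulVec a - u ⬝ᵥ M.mulVec u)
        + t ^ 2 * (u ⬝ᵥ M.mulVec u) := by
  simp only [Matrix.mulVec_add, Matrix.mulVec_smul, dotProduct_add, add_dotProduct,
    dotProduct_smul, smul_dotProduct, smul_eq_mul]
  ring

lemma aux_lin {k : ℕ} (c a u : Fin k → ℝ) (t : ℝ) :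
    c ⬝ᵥ (a + t • u) = c ⬝ᵥ a + t * (c ⬝ᵥ (a + u) - c ⬝ᵥ a) := by
  simp only [dotProduct_add, dotProduct_smul, smul_eq_mul]
  ring

lemma obj_expand (nb n m : ℕ) (C S : Matrix (Fin nb) (Fin nb) ℝ)
    (γ : Fin nb → ℝ) (c cplus cminus s : Fin nb → ℝ)
    (φ : Fin n → Fin m → ℝ) (w : Fin n → Fin nb → ℝ) (x v : MarketPoint nb n m) (t : ℝ) :
    marketObj nb n m C S γ c cplus cminus s φ w (x + t • v) =
      marketObj nb n m C S γ c cplus cminus s φ w x +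
      t * (marketObj nb n m C S γ c cplus cminus s φ w (x + v)
        - marketObj nb n m C S γ c cplus cminus s φ w x
        - marketObj nb n m C S γ 0 0 0 0 φ 0 v)
      + t ^ 2 * marketObj nb n m C S γ 0 0 0 0 φ 0 v := by
  obtain ⟨Θ, p, rp, rm, ℓ⟩ := x
  obtain ⟨Ξ, q, qp, qm, k⟩ := v
  have key : ∀ (A B D E Q : Fin n → ℝ), (∀ i, A i = B i + t * (D i - B i - Q i) + t ^ 2 * Q i) →
      (1 / (n : ℝ)) * ∑ i, A i = (1 / (n : ℝ)) * ∑ i, B i +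
        t * ((1 / (n : ℝ)) * ∑ i, D i - (1 / (n : ℝ)) * ∑ i, B i - (1 / (n : ℝ)) * ∑ i, Q i)
        + t ^ 2 * ((1 / (n : ℝ)) * ∑ i, Q i) := by
    intro A B D E Q h
    simp only [h, Finset.sum_add_distrib, ← Finset.mul_sum, Finset.sum_sub_distrib]
    ring
  simp only [marketObj, Prod.smul_mk, Prod.mk_add_mk]
  refine key _ _ _ (fun _ => 0) _ ?_
  intro i
  have e1 : (Matrix.of (Θ + t • Ξ)).mulVec (φ i) - w i =
      ((Matrix.of Θ).mulVec (φ i) - w i) + t • (Matrix.of Ξ).mulVec (φ i) := by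
    rw [← Matrix.of_add_of, ← Matrix.smul_of, Matrix.add_mulVec, Matrix.smul_mulVec]; abel
  have e2 : (Matrix.of (Θ + Ξ)).mulVec (φ i) - w i =
      ((Matrix.of Θ).mulVec (φ i) - w i) + (Matrix.of Ξ).mulVec (φ i) := by
    rw [← Matrix.of_add_of, Matrix.add_mulVec]; abel
  have e3 : (p + t • q) i + (rp + t • qp) i - (rm + t • qm) i =
      (p i + rp i - rm i) + t • (q i + qp i - qm i) := by
    ext j; simp; ring
  have e4 : (p + q) i + (rp + qp) i - (rm + qm) i =
      (p i + rp i - rm i) + (q i + qp i - qm i) := by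
    ext j; simp; ring
  rw [e1, e2, e3, e4]
  simp only [Pi.add_apply, Pi.smul_apply, Pi.zero_apply, sub_zero, zero_dotProduct]
  rw [aux_quad, aux_quad C, aux_quad S, aux_lin c, aux_lin cplus, aux_lin cminus, aux_lin s]
  ring

lemma obj_diff (nb n m : ℕ) (C S : Matrix (Fin nb) (Fin nb) ℝ)
    (γ : Fin nb → ℝ) (c cplus cminus s : Fin nb → ℝ)
    (φ : Fin n → Fin m → ℝ) (w : Fin n → Fin nb → ℝ) :
    Differentiable ℝ (marketObj nb n m C S γ c cplus cminus s φ w) := by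
  unfold marketObj
  simp only [dotProduct, Matrix.mulVec, Pi.add_apply, Pi.sub_apply, Matrix.of_apply]
  fun_prop

lemma obj_fderiv (nb n m : ℕ) (C S : Matrix (Fin nb) (Fin nb) ℝ)
    (γ : Fin nb → ℝ) (c cplus cminus s : Fin nb → ℝ)
    (φ : Fin n → Fin m → ℝ) (w : Fin n → Fin nb → ℝ) (x v : MarketPoint nb n m) :
    fderiv ℝ (marketObj nb n m C S γ c cplus cminus s φ w) x v =
      marketObj nb n m C S γ c cplus cminus s φ w (x + v)
        - marketObj nb n m C S γ c cplus cminus s φ w x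
        - marketObj nb n m C S γ 0 0 0 0 φ 0 v := by
  have h1 := ((obj_diff nb n m C S γ c cplus cminus s φ w) x).hasFDerivAt.hasLineDerivAt v
  unfold HasLineDerivAt at h1
  simp only [obj_expand] at h1
  refine h1.unique ?_
  set b := marketObj nb n m C S γ c cplus cminus s φ w (x + v)
        - marketObj nb n m C S γ c cplus cminus s φ w x
        - marketObj nb n m C S γ 0 0 0 0 φ 0 v
  have := (((hasDerivAt_id (0:ℝ)).mul_const b).const_add
    (marketObj nb n m C S γ c cplus cminus s φ w x)).add
    (((hasDerivAt_id (0:ℝ)).pow 2).mul_const (marketObj nb n m C S γ 0 0 0 0 φ 0 v))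
  convert this using 1
  · funext t; simp
  · simp

lemma quad_nonneg {k : ℕ} {M : Matrix (Fin k) (Fin k) ℝ} (h : M.PosDef) (u : Fin k → ℝ) :
    0 ≤ u ⬝ᵥ M.mulVec u := by
  simpa using h.posSemidef.dotProduct_mulVec_nonneg u

lemma quad_zero {k : ℕ} {M : Matrix (Fin k) (Fin k) ℝ} (h : M.PosDef) (u : Fin k → ℝ)
    (hu : u ⬝ᵥ M.mulVec u ≤ 0) : u = 0 := by
  by_contra hne
  have := h.dotProduct_mulVec_pos hne
  simp at this
  linarith

/-- Uniqueness of regression equilibrium: with `C`, `S` symmetric positive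
definite and all `γⱼ > 0`, any two solutions of the variational inequality
VI(K, ∇f) have the same predictions `Θφᵢ`, the same total dispatch
`pᵢ + rᵢ⁺ − rᵢ⁻`, and the same load shedding `ℓᵢ` for every sample `i`;
if moreover the feature Gram matrix `Σᵢ φᵢφᵢᵀ` is positive definite,
the regression profiles coincide. -/
theorem regression_equilibrium_unique (nb n m nl : ℕ)
    (C S : Matrix (Fin nb) (Fin nb) ℝ) (hC : C.PosDef) (hS : S.PosDef)
    (γ : Fin nb → ℝ) (hγ : ∀ j, 0 < γ j)
    (c cplus cminus s d plow pup : Fin nb → ℝ) (hp : plow ≤ pup)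
    (Fptdf : Matrix (Fin nl) (Fin nb) ℝ) (fbar : Fin nl → ℝ)
    (φ : Fin n → Fin m → ℝ) (w : Fin n → Fin nb → ℝ)
    (τ : Fin nb → ℝ) (hτ : ∀ j, 0 < τ j)
    (Θ Θ' : Fin nb → Fin m → ℝ) (p rp rm ℓ p' rp' rm' ℓ' : Fin n → Fin nb → ℝ)
    (hmem : (Θ, p, rp, rm, ℓ) ∈ marketFeas nb n m nl d plow pup Fptdf fbar φ w τ)
    (hsol : ∀ x ∈ marketFeas nb n m nl d plow pup Fptdf fbar φ w τ,
      0 ≤ fderiv ℝ (marketObj nb n m C S γ c cplus cminus s φ w)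
            (Θ, p, rp, rm, ℓ) (x - (Θ, p, rp, rm, ℓ)))
    (hmem' : (Θ', p', rp', rm', ℓ') ∈ marketFeas nb n m nl d plow pup Fptdf fbar φ w τ)
    (hsol' : ∀ x ∈ marketFeas nb n m nl d plow pup Fptdf fbar φ w τ,
      0 ≤ fderiv ℝ (marketObj nb n m C S γ c cplus cminus s φ w)
            (Θ', p', rp', rm', ℓ') (x - (Θ', p', rp', rm', ℓ'))) :
    ((∀ i, (Matrix.of Θ).mulVec (φ i) = (Matrix.of Θ').mulVec (φ i)) ∧
     (∀ i, p i + rp i - rm i = p' i + rp' i - rm' i) ∧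
     (∀ i, ℓ i = ℓ' i)) ∧
    ((∑ i, Matrix.vecMulVec (φ i) (φ i)).PosDef → Θ = Θ') := by
  have hpred : (∀ i, (Matrix.of Θ).mulVec (φ i) = (Matrix.of Θ').mulVec (φ i)) ∧
     (∀ i, p i + rp i - rm i = p' i + rp' i - rm' i) ∧
     (∀ i, ℓ i = ℓ' i) := by
    have h1 := hsol _ hmem'
    have h2 := hsol' _ hmem
    rw [obj_fderiv, add_sub_cancel] at h1 h2
    have hΓ : (Matrix.diagonal γ).PosDef := Matrix.PosDef.diagonal hγ
    have hneg : marketObj nb n m C S γ 0 0 0 0 φ 0 ((Θ', p', rp', rm', ℓ') - (Θ, p, rp, rm, ℓ))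
        = marketObj nb n m C S γ 0 0 0 0 φ 0 ((Θ, p, rp, rm, ℓ) - (Θ', p', rp', rm', ℓ')) := by
      have h := obj_expand nb n m C S γ 0 0 0 0 φ 0 0
        ((Θ, p, rp, rm, ℓ) - (Θ', p', rp', rm', ℓ')) (-1)
      have h0 : marketObj nb n m C S γ 0 0 0 0 φ 0 0 = 0 := by
        have := obj_expand nb n m C S γ 0 0 0 0 φ 0 0 0 2
        simp only [smul_zero, add_zero] at this
        linarith
      rw [zero_add, zero_add, h0, neg_one_smul, neg_sub] at h
      rw [h]; ring
    have hq : marketObj nb n m C S γ 0 0 0 0 φ 0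
        ((Θ, p, rp, rm, ℓ) - (Θ', p', rp', rm', ℓ')) ≤ 0 := by linarith
    simp only [marketObj, Prod.mk_sub_mk, zero_dotProduct, Pi.zero_apply, sub_zero,
      add_zero] at hq
    have hall : ∀ i : Fin n, _ := fun i => by
      have hn : 0 < (1 / (n : ℝ)) := by
        have : 0 < n := i.pos
        positivity
      have hs := nonpos_of_mul_nonpos_right hq hn
      have hi := (Finset.single_le_sum (fun j _ => add_nonneg (add_nonneg
        (quad_nonneg hΓ ((Matrix.of (Θ - Θ')).mulVec (φ j)))
        (quad_nonneg hC ((p - p') j + (rp - rp') j - (rm - rm') j)))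
        (quad_nonneg hS ((ℓ - ℓ') j))) (Finset.mem_univ i)).trans hs
      have a1 := quad_nonneg hΓ ((Matrix.of (Θ - Θ')).mulVec (φ i))
      have a2 := quad_nonneg hC ((p - p') i + (rp - rp') i - (rm - rm') i)
      have a3 := quad_nonneg hS ((ℓ - ℓ') i)
      exact And.intro (quad_zero hΓ _ (by linarith)) (And.intro
        (quad_zero hC _ (by linarith)) (quad_zero hS _ (by linarith)))
    refine ⟨fun i => ?_, fun i => ?_, fun i => ?_⟩
    · have := (hall i).1
      rw [← Matrix.of_sub_of, Matrix.sub_mulVec] at this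
      exact sub_eq_zero.mp this
    · have := (hall i).2.1
      rw [← sub_eq_zero, ← this]
      simp only [Pi.sub_apply]; abel
    · exact sub_eq_zero.mp (hall i).2.2
  refine ⟨hpred, fun hG => ?_⟩
  funext j
  rw [← sub_eq_zero]
  apply quad_zero hG
  rw [Matrix.sum_mulVec, dotProduct_sum]
  apply le_of_eq
  apply Finset.sum_eq_zero
  intro i _
  have h := congrFun (hpred.1 i) j
  have h' : φ i ⬝ᵥ (Θ j - Θ' j) = 0 := by
    rw [dotProduct_comm, sub_dotProduct, sub_eq_zero]
    exact h
  rw [Matrix.vecMulVec_mulVec, h']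
  simp
end
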